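/- Let $c$ and $\mu$ be fixed real numbers with $1 < c < \frac{17}{16}$ and $0 < \mu < 1$. There exists a constant $C = C(c, \mu) > 0$ such that for every real $X \geq 3$ one has $\int_{-1}^{1} |I(\alpha)|^2 \, d\alpha \leq C X (\log X)^5$. -/

import Mathlib

/-!
The phase `α t ^ c` has derivative `α c t ^ (c - 1)`, so one integration by parts gives the
first-derivative bound `|α| |I(α)| ≤ (μ X) ^ (1 - c) ≤ K` with `K = μ ^ (1 - c)`
(`abs_mul_norm_I_le`). Combined with the trivial bound `|I(α)| ≤ X` this yields
`|I(α)|² ≤ 2 X² / (1 + (X α / K)²)`, whose integral over `[-1, 1]` is at most `2 π K X` by the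
arctangent primitive. The logarithmic factor is not needed: `log X ≥ 1` for `X ≥ 3`.
-/

/-- `e(t) = e^{2πit}`. -/
noncomputable def e (t : ℝ) : ℂ := Complex.exp (2 * Real.pi * Complex.I * t)

/-- `I(α) = ∫_{μX}^{X} e(α t^c) dt`. -/
noncomputable def I (c μ X : ℝ) (α : ℝ) : ℂ := ∫ t in (μ * X)..X, e (α * t ^ c)

lemma norm_e (t : ℝ) : ‖e t‖ = 1 := by
  have h : (2 * Real.pi * Complex.I * t : ℂ) = ((2 * Real.pi * t : ℝ) : ℂ) * Complex.I := by
    push_cast; ring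
  rw [e, h, Complex.norm_exp_ofReal_mul_I]

lemma continuous_e : Continuous e := by
  unfold e
  fun_prop

lemma hasDerivAt_e_mul_rpow (c α : ℝ) {t : ℝ} (ht : 0 < t) :
    HasDerivAt (fun t : ℝ => e (α * t ^ c))
      ((2 * Real.pi * Complex.I * (α * c * t ^ (c - 1) : ℝ)) * e (α * t ^ c)) t := by
  have h1 : HasDerivAt (fun t : ℝ => α * t ^ c) (α * c * t ^ (c - 1)) t := by
    have := (Real.hasDerivAt_rpow_const (p := c) (Or.inl ht.ne')).const_mul α
    rwa [← mul_assoc] at this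
  have h2 := ((h1.ofReal_comp).const_mul (2 * Real.pi * Complex.I : ℂ)).cexp
  rw [mul_comm]
  exact h2

lemma norm_I_le {c μ X : ℝ} (hμ1 : 0 < μ) (hμ2 : μ < 1) (hX : 3 ≤ X) (α : ℝ) :
    ‖I c μ X α‖ ≤ X := by
  have h := intervalIntegral.norm_integral_le_of_norm_le_const (a := μ * X) (b := X) (C := 1)
    (f := fun t => e (α * t ^ c)) (fun t _ => (norm_e _).le)
  rw [abs_of_nonneg (by nlinarith)] at h
  have : 0 < μ * X := by positivity
  unfold I
  linarith

/-- First-derivative bound, by integrating `t ^ (1 - c)` against the derivative of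
`e (α t ^ c)`; the total variation of `t ^ (1 - c)` is controlled by its monotonicity. -/
lemma abs_mul_norm_I_le {c μ X : ℝ} (hc1 : 1 < c) (hμ1 : 0 < μ) (hμ2 : μ < 1) (hX : 3 ≤ X)
    (α : ℝ) : |α| * ‖I c μ X α‖ ≤ μ ^ (1 - c) := by
  have ha : 0 < μ * X := by positivity
  have hab : μ * X ≤ X := by nlinarith
  have hpos : ∀ t ∈ Set.uIcc (μ * X) X, 0 < t := fun t ht => by
    rw [Set.uIcc_of_le hab] at ht; exact ha.trans_le ht.1
  have hcont : ∀ p : ℝ, ContinuousOn (fun t : ℝ => t ^ p) (Set.uIcc (μ * X) X) := fun p t ht =>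
    (Real.continuousAt_rpow_const t p (Or.inl (hpos t ht).ne')).continuousWithinAt
  have hcontE : ContinuousOn (fun t : ℝ => e (α * t ^ c)) (Set.uIcc (μ * X) X) :=
    continuous_e.comp_continuousOn ((hcont c).const_smul α)
  have hu : ∀ t ∈ Set.uIcc (μ * X) X,
      HasDerivAt (fun t : ℝ => t ^ (1 - c)) ((1 - c) * t ^ (1 - c - 1)) t := fun t ht =>
    Real.hasDerivAt_rpow_const (Or.inl (hpos t ht).ne')
  have hu'c : ContinuousOn (fun t : ℝ => (1 - c) * t ^ (1 - c - 1)) (Set.uIcc (μ * X) X) :=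
    (hcont _).const_smul (1 - c)
  have hparts := intervalIntegral.integral_mul_deriv_eq_deriv_mul
    (fun t ht => (hu t ht).ofReal_comp)
    (fun t ht => hasDerivAt_e_mul_rpow c α (hpos t ht))
    (Complex.continuous_ofReal.comp_continuousOn hu'c).intervalIntegrable
    (ContinuousOn.intervalIntegrable (by
      refine ContinuousOn.mul (continuousOn_const.mul ?_) hcontE
      exact Complex.continuous_ofReal.comp_continuousOn ((hcont _).const_smul (α * c))))
  have hlhs : (∫ t in (μ * X)..X, ((t ^ (1 - c) : ℝ) : ℂ) *
      ((2 * Real.pi * Complex.I * (α * c * t ^ (c - 1) : ℝ)) * e (α * t ^ c)))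
      = (2 * Real.pi * Complex.I * (α * c : ℝ)) * I c μ X α := by
    rw [I, ← intervalIntegral.integral_const_mul]
    refine intervalIntegral.integral_congr fun t ht => ?_
    have h1 : t ^ (1 - c) * t ^ (c - 1) = 1 := by
      rw [← Real.rpow_add (hpos t ht)]; simp
    have h2 : ((t ^ (1 - c) : ℝ) : ℂ) * ((t ^ (c - 1) : ℝ) : ℂ) = 1 := by
      rw [← Complex.ofReal_mul, h1, Complex.ofReal_one]
    simp only [Complex.ofReal_mul]
    linear_combination (2 * Real.pi * Complex.I * (α * c) * e (α * t ^ c)) * h2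
  have hvar : ‖∫ t in (μ * X)..X, (((1 - c) * t ^ (1 - c - 1) : ℝ) : ℂ) * e (α * t ^ c)‖
      ≤ (μ * X) ^ (1 - c) - X ^ (1 - c) := by
    have hint : (∫ t in (μ * X)..X, -((1 - c) * t ^ (1 - c - 1)))
        = (μ * X) ^ (1 - c) - X ^ (1 - c) := by
      rw [intervalIntegral.integral_neg,
        intervalIntegral.integral_eq_sub_of_hasDerivAt hu hu'c.intervalIntegrable]
      ring
    rw [← hint]
    refine intervalIntegral.norm_integral_le_of_norm_le hab ?_ hu'c.neg.intervalIntegrable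
    refine Filter.Eventually.of_forall fun t ht => ?_
    have : 0 < t ^ (1 - c - 1) := Real.rpow_pos_of_pos (ha.trans ht.1) _
    rw [norm_mul, norm_e, mul_one, Complex.norm_real, Real.norm_eq_abs,
      abs_of_nonpos (by nlinarith)]
  rw [hlhs] at hparts
  have hnorm : ‖(2 * Real.pi * Complex.I * (α * c : ℝ)) * I c μ X α‖
      ≤ 2 * (μ * X) ^ (1 - c) := by
    rw [hparts]
    refine (norm_sub_le _ _).trans ?_
    refine (add_le_add (norm_sub_le _ _) hvar).trans ?_
    rw [norm_mul, norm_mul, norm_e, norm_e, Complex.norm_real, Complex.norm_real,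
      Real.norm_of_nonneg (by positivity), Real.norm_of_nonneg (by positivity)]
    linarith
  have heq : ‖(2 * Real.pi * Complex.I * (α * c : ℝ)) * I c μ X α‖
      = 2 * (Real.pi * c) * (|α| * ‖I c μ X α‖) := by
    simp only [norm_mul, Complex.norm_real, Complex.norm_I, Real.norm_eq_abs,
      abs_of_pos Real.pi_pos, abs_mul, abs_of_pos (zero_lt_one.trans hc1), Complex.norm_ofNat]
    ring
  have hK : (μ * X) ^ (1 - c) ≤ μ ^ (1 - c) :=
    Real.rpow_le_rpow_of_nonpos hμ1 (by nlinarith) (by linarith)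
  have hpc : 1 ≤ Real.pi * c := by nlinarith [Real.pi_gt_three]
  have h0 : 0 ≤ |α| * ‖I c μ X α‖ := by positivity
  nlinarith

theorem stmt_7 (c μ : ℝ) (hc1 : 1 < c) (hc2 : c < 17 / 16) (hμ1 : 0 < μ) (hμ2 : μ < 1) :
    ∃ C : ℝ, 0 < C ∧
      ∀ X : ℝ, 3 ≤ X →
        (∫ α in (-1 : ℝ)..1, ‖I c μ X α‖ ^ 2) ≤ C * X * Real.log X ^ 5 := by
  have hK : 0 < μ ^ (1 - c) := Real.rpow_pos_of_pos hμ1 _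
  refine ⟨2 * Real.pi * μ ^ (1 - c), by positivity, fun X hX => ?_⟩
  have hb := fun α => abs_mul_norm_I_le hc1 hμ1 hμ2 hX α
  set K := μ ^ (1 - c) with hKdef
  have hX0 : 0 < X := by linarith
  have hlog : 1 ≤ Real.log X := by
    rw [Real.le_log_iff_exp_le hX0]
    linarith [Real.exp_one_lt_d9]
  have hlog5 : 1 ≤ Real.log X ^ 5 := one_le_pow₀ hlog
  have hpt : ∀ α : ℝ, ‖I c μ X α‖ ^ 2 ≤ 2 * X ^ 2 * (1 + (X / K * α) ^ 2)⁻¹ := fun α => by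
    have h1 := norm_I_le (c := c) hμ1 hμ2 hX α
    have h2 := hb α
    have h3 : ‖I c μ X α‖ ^ 2 ≤ X ^ 2 := by gcongr
    have h4 : α ^ 2 * ‖I c μ X α‖ ^ 2 ≤ K ^ 2 := by
      rw [← sq_abs α, ← mul_pow]; gcongr
    rw [← div_eq_mul_inv, le_div_iff₀ (by positivity)]
    have h5 : ‖I c μ X α‖ ^ 2 * (X / K * α) ^ 2 ≤ X ^ 2 := by
      calc ‖I c μ X α‖ ^ 2 * (X / K * α) ^ 2
          = (X / K) ^ 2 * (α ^ 2 * ‖I c μ X α‖ ^ 2) := by ring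
        _ ≤ (X / K) ^ 2 * K ^ 2 := by gcongr
        _ = X ^ 2 := by field_simp
    linarith
  have hmain : (∫ α in (-1 : ℝ)..1, ‖I c μ X α‖ ^ 2) ≤ 2 * Real.pi * K * X := by
    by_cases hint : IntervalIntegrable (fun α => ‖I c μ X α‖ ^ 2) MeasureTheory.volume (-1) 1
    · have hcont : Continuous fun α : ℝ => 2 * X ^ 2 * (1 + (X / K * α) ^ 2)⁻¹ :=
        continuous_const.mul (Continuous.inv₀ (by fun_prop) fun α => by positivity)
      refine (intervalIntegral.integral_mono_on (by norm_num) hint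
        (hcont.intervalIntegrable _ _) fun α _ => hpt α).trans ?_
      rw [intervalIntegral.integral_const_mul,
        intervalIntegral.integral_comp_mul_left (fun x => (1 + x ^ 2)⁻¹)
          (by positivity : X / K ≠ 0), integral_inv_one_add_sq, smul_eq_mul]
      have h1 := Real.arctan_lt_pi_div_two (X / K * 1)
      have h2 := Real.neg_pi_div_two_lt_arctan (X / K * -1)
      calc 2 * X ^ 2 * ((X / K)⁻¹ * (Real.arctan (X / K * 1) - Real.arctan (X / K * -1)))
          ≤ 2 * X ^ 2 * ((X / K)⁻¹ * Real.pi) := by gcongr; linarith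
        _ = 2 * Real.pi * K * X := by field_simp
    -- A non-integrable integrand would have integral zero by convention.
    · rw [intervalIntegral.integral_undef hint]
      positivity
  exact hmain.trans (le_mul_of_one_le_right (by positivity) hlog5)
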